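/- Let (X,μ,S,T) be a free ergodic magic measure preserving system with commuting transformations S and T, let f1, f2 ∈ L∞(μ), and let f3 ∈ L∞(μ) satisfy E(f3 | I_S ∨ I_T) = 0. Then (1/N²) Σ_{i=0}^{N-1} Σ_{j=0}^{N-1} f1(S^i x) f2(T^j x) f3(S^i T^j x) converges to 0 for μ-almost every x ∈ X as N → ∞. -/

import Mathlib

open MeasureTheory Filter

/-- The σ-algebra of `R`-invariant measurable sets. -/
def invSigma {X : Type*} [MeasurableSpace X] (R : X → X) : MeasurableSpace X where
  MeasurableSet' s := MeasurableSet s ∧ R ⁻¹' s = s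
  measurableSet_empty := ⟨MeasurableSet.empty, rfl⟩
  measurableSet_compl s hs := ⟨hs.1.compl, by rw [Set.preimage_compl, hs.2]⟩
  measurableSet_iUnion f hf := ⟨MeasurableSet.iUnion fun i => (hf i).1, by
    rw [Set.preimage_iUnion]; exact Set.iUnion_congr fun i => (hf i).2⟩

/-- `μ2` is the relatively independent self-joining of `μ` over `I_R`. -/
def IsRelIndJoining {X : Type*} [MeasurableSpace X] (μ : Measure X) (R : X → X)
    (μ2 : Measure (X × X)) : Prop :=
  ∀ f0 f1 : X → ℝ, Measurable f0 → Measurable f1 →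
    (∃ C, ∀ x, |f0 x| ≤ C) → (∃ C, ∀ x, |f1 x| ≤ C) →
    ∫ p, f0 p.1 * f1 p.2 ∂μ2 =
      ∫ x, (μ[f0 | invSigma R]) x * (μ[f1 | invSigma R]) x ∂μ

/-- `μ4` is the relatively independent self-joining of `μ2` over `I_{T×T}`. -/
def IsHostJoining {X : Type*} [MeasurableSpace X] (μ2 : Measure (X × X)) (T : X → X)
    (μ4 : Measure (X × X × X × X)) : Prop :=
  ∀ f0 f1 f2 f3 : X → ℝ, Measurable f0 → Measurable f1 → Measurable f2 → Measurable f3 →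
    (∃ C, ∀ x, |f0 x| ≤ C) → (∃ C, ∀ x, |f1 x| ≤ C) →
    (∃ C, ∀ x, |f2 x| ≤ C) → (∃ C, ∀ x, |f3 x| ≤ C) →
    ∫ p, f0 p.1 * f1 p.2.1 * f2 p.2.2.1 * f3 p.2.2.2 ∂μ4 =
      ∫ q, (μ2[(fun r => f0 r.1 * f1 r.2) | invSigma (Prod.map T T)]) q *
           (μ2[(fun r => f2 r.1 * f3 r.2) | invSigma (Prod.map T T)]) q ∂μ2

/-- The Host seminorm `|||f|||_{μ,S,T}` of `f`, computed from the Host measure `μ_{S,T}`. -/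
noncomputable def hostSeminorm {X : Type*} [MeasurableSpace X]
    (μ4 : Measure (X × X × X × X)) (f : X → ℝ) : ℝ :=
  (∫ p, f p.1 * f p.2.1 * f p.2.2.1 * f p.2.2.2 ∂μ4) ^ ((1 : ℝ) / 4)

lemma max_erg {X : Type*} [MeasurableSpace X] (μ : Measure X) [IsProbabilityMeasure μ]
    (R : X → X) (hR : MeasurePreserving R μ μ) (g : X → ℝ) (hg : Measurable g)
    (b : ℝ) (h0 : ∀ x, 0 ≤ g x) (hb : ∀ x, g x ≤ b) (l : ℝ) (hl : 0 < l) :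
    MeasurableSet {x | ∃ n : ℕ, l * n < ∑ i ∈ Finset.range n, g (R^[i] x)} ∧
    l * μ.real {x | ∃ n : ℕ, l * n < ∑ i ∈ Finset.range n, g (R^[i] x)} ≤ ∫ x, g x ∂μ := by
  have hRm := hR.measurable
  let M : ℕ → X → ℝ := fun n => Nat.rec (fun _ => 0) (fun _ F x => max 0 (g x - l + F (R x))) n
  have M0 : ∀ x, M 0 x = 0 := fun x => rfl
  have Ms : ∀ n x, M (n+1) x = max 0 (g x - l + M n (R x)) := fun n x => rfl
  have Mm : ∀ n, Measurable (M n) := by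
    intro n
    induction n with
    | zero => exact measurable_const
    | succ n ih => exact measurable_const.max ((hg.sub_const l).add (ih.comp hRm))
  have Mnn : ∀ n x, 0 ≤ M n x := by
    intro n x
    cases n with
    | zero => exact le_rfl
    | succ n => rw [Ms]; exact le_max_left _ _
  have b0 : ∀ x, 0 ≤ b := fun x => (h0 x).trans (hb x)
  have Mb : ∀ n x, M n x ≤ n * b := by
    intro n
    induction n with
    | zero => intro x; simp [M0]
    | succ n ih =>
      intro x
      rw [Ms]
      have := ih (R x)
      have := hb x
      have := b0 x
      push_cast
      refine max_le (by positivity) (by linarith)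
  have Mmono : ∀ n x, M n x ≤ M (n+1) x := by
    intro n
    induction n with
    | zero => intro x; exact Mnn 1 x
    | succ n ih =>
      intro x
      rw [Ms, Ms (n+1)]
      have := ih (R x)
      gcongr
  have MS : ∀ n x, ∑ i ∈ Finset.range n, g (R^[i] x) - l * n ≤ M n x := by
    intro n
    induction n with
    | zero => intro x; simp [M0]
    | succ n ih =>
      intro x
      rw [Ms, Finset.sum_range_succ']
      refine le_max_of_le_right ?_
      have := ih (R x)
      simp only [Function.iterate_succ_apply, Function.iterate_zero, id]
      push_cast
      linarith
  have Mi : ∀ n, Integrable (M n) μ := fun n =>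
    Integrable.of_bound (Mm n).aestronglyMeasurable (n * b)
      (ae_of_all _ fun x => by rw [Real.norm_of_nonneg (Mnn n x)]; exact Mb n x)
  have MRi : ∀ n, Integrable (fun x => M n (R x)) μ := fun n =>
    (hR.integrable_comp (Mi n).aestronglyMeasurable).2 (Mi n)
  have gi : Integrable g μ := Integrable.of_bound hg.aestronglyMeasurable b
      (ae_of_all _ fun x => by rw [Real.norm_of_nonneg (h0 x)]; exact hb x)
  have Em : ∀ n, MeasurableSet {x | 0 < M n x} := fun n => measurableSet_lt measurable_const (Mm n)
  have key : ∀ n, l * μ.real {x | 0 < M n x} ≤ ∫ x, g x ∂μ := by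
    intro n
    have hi : Integrable ({x | 0 < M n x}.indicator (fun _ => (1:ℝ))) μ :=
      (integrable_const _).indicator (Em n)
    have h1 : ∫ x, (M n x + l * {x | 0 < M n x}.indicator (fun _ => (1:ℝ)) x) ∂μ
        ≤ ∫ x, (g x + M n (R x)) ∂μ := by
      refine integral_mono ((Mi n).add (hi.const_mul l)) (gi.add (MRi n)) ?_
      rw [Pi.le_def]
      intro (x : X)
      rcases lt_or_ge 0 (M n x) with hx | hx
      · have h2 : 0 < M (n+1) x := hx.trans_le (Mmono n x)
        have h3 := Mmono n x
        rw [Ms] at h2 h3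
        have h4 : 0 < g x - l + M n (R x) := by
          rcases lt_max_iff.1 h2 with h | h
          · exact absurd h (lt_irrefl _)
          · exact h
        rw [max_eq_right h4.le] at h3
        have h5 : {x | 0 < M n x}.indicator (fun _ => (1:ℝ)) x = 1 := Set.indicator_of_mem (s := {x | 0 < M n x}) hx _
        simp only [h5]
        linarith
      · have h2 : M n x = 0 := le_antisymm hx (Mnn n x)
        have := Mnn n (R x)
        have := h0 x
        have h5 : {x | 0 < M n x}.indicator (fun _ => (1:ℝ)) x = 0 := Set.indicator_of_notMem (s := {x | 0 < M n x}) (not_lt.2 hx) _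
        simp only [h5]
        linarith
    rw [integral_add (Mi n) (hi.const_mul l), integral_add gi (MRi n),
      integral_const_mul, integral_indicator_const _ (Em n)] at h1
    have h5 : ∫ x, M n (R x) ∂μ = ∫ x, M n x ∂μ := by
      have := integral_map (μ := μ) hRm.aemeasurable (f := M n) (by rw [hR.map_eq]; exact (Mm n).aestronglyMeasurable)
      rw [hR.map_eq] at this
      exact this.symm
    simp only [smul_eq_mul, mul_one] at h1
    linarith
  have sub : {x | ∃ n : ℕ, l * n < ∑ i ∈ Finset.range n, g (R^[i] x)} ⊆ ⋃ n, {x | 0 < M n x} := by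
    rintro x ⟨n, hn⟩
    refine Set.mem_iUnion.2 ⟨n, ?_⟩
    have := MS n x
    show 0 < M n x
    linarith
  constructor
  · have : {x | ∃ n : ℕ, l * n < ∑ i ∈ Finset.range n, g (R^[i] x)}
      = ⋃ n : ℕ, {x | l * n < ∑ i ∈ Finset.range n, g (R^[i] x)} := by ext; simp
    rw [this]
    refine MeasurableSet.iUnion fun n => measurableSet_lt measurable_const ?_
    exact Finset.measurable_sum _ fun i _ => hg.comp (hRm.iterate i)
  · have hm : Monotone fun n => {x | 0 < M n x} :=
      monotone_nat_of_le_succ fun n x hx => lt_of_lt_of_le hx (Mmono n x)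
    have ht := tendsto_measure_iUnion_atTop (μ := μ) hm
    have ht2 := (ENNReal.tendsto_toReal (measure_ne_top μ _)).comp ht
    have h6 : l * μ.real (⋃ n, {x | 0 < M n x}) ≤ ∫ x, g x ∂μ :=
      le_of_tendsto' (ht2.const_mul l) key
    refine le_trans ?_ h6
    gcongr
    exact measure_ne_top μ _

lemma shift1 (w : ℕ → ℝ) (C : ℝ) (hw : ∀ p, |w p| ≤ C) (N i : ℕ) :
    |∑ p ∈ Finset.range N, w (p + i) - ∑ p ∈ Finset.range N, w p| ≤ 2 * i * C := by
  induction i with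
  | zero => simp
  | succ i ih =>
    have h1 : ∑ p ∈ Finset.range N, w (p + (i+1)) = ∑ p ∈ Finset.range N, w (p + i) + (w (N + i) - w i) := by
      have a1 := Finset.sum_range_succ (fun p => w (p + i)) N
      have a2 := Finset.sum_range_succ' (fun p => w (p + i)) N
      simp only [zero_add] at a2
      have a3 : ∀ p, p + 1 + i = p + (i + 1) := fun p => by ring
      simp only [a3] at a2
      linarith
    rw [h1]
    have a4 := abs_le.1 (hw (N+i))
    have a5 := abs_le.1 (hw i)
    have a6 := abs_le.1 ih
    push_cast
    rw [abs_le]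
    constructor <;> linarith

lemma shift2 (W : ℕ → ℕ → ℝ) (C : ℝ) (hw : ∀ p q, |W p q| ≤ C) (N i j : ℕ) :
    |∑ p ∈ Finset.range N, ∑ q ∈ Finset.range N, W (p + i) (q + j)
      - ∑ p ∈ Finset.range N, ∑ q ∈ Finset.range N, W p q| ≤ 2 * (i + j) * C * N := by
  have h1 : |∑ p ∈ Finset.range N, ∑ q ∈ Finset.range N, W (p + i) (q + j)
      - ∑ p ∈ Finset.range N, ∑ q ∈ Finset.range N, W p (q+j)| ≤ 2 * i * (N * C) := by
    refine shift1 (fun p => ∑ q ∈ Finset.range N, W p (q + j)) (N * C) (fun p => ?_) N i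
    refine (Finset.abs_sum_le_sum_abs _ _).trans ?_
    refine (Finset.sum_le_card_nsmul _ _ C fun q _ => hw _ _).trans ?_
    simp
  have h2 : |∑ p ∈ Finset.range N, ∑ q ∈ Finset.range N, W p (q + j)
      - ∑ p ∈ Finset.range N, ∑ q ∈ Finset.range N, W p q| ≤ N * (2 * j * C) := by
    rw [← Finset.sum_sub_distrib]
    refine (Finset.abs_sum_le_sum_abs _ _).trans ?_
    refine (Finset.sum_le_card_nsmul _ _ (2 * j * C) fun p _ => shift1 (W p) C (hw p) N j).trans ?_
    simp
  have a1 := abs_le.1 h1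
  have a2 := abs_le.1 h2
  rw [abs_le]
  constructor <;> linarith

lemma block_avg (W : ℕ → ℕ → ℝ) (C : ℝ) (hC : 0 ≤ C) (hw : ∀ p q, |W p q| ≤ C) (N H K : ℕ)
    (hH : 0 < H) (hK : 0 < K) :
    |∑ p ∈ Finset.range N, ∑ q ∈ Finset.range N, W p q| ≤ 2 * (H + K) * C * N +
      ∑ p ∈ Finset.range N, ∑ q ∈ Finset.range N,
        |((H : ℝ) * K)⁻¹ * ∑ i ∈ Finset.range H, ∑ j ∈ Finset.range K, W (p + i) (q + j)| := by
  have hH' : (0:ℝ) < H := by exact_mod_cast hH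
  have hK' : (0:ℝ) < K := by exact_mod_cast hK
  set Z0 := ∑ p ∈ Finset.range N, ∑ q ∈ Finset.range N, W p q with hZ0
  have e1 : ∑ p ∈ Finset.range N, ∑ q ∈ Finset.range N,
        (((H : ℝ) * K)⁻¹ * ∑ i ∈ Finset.range H, ∑ j ∈ Finset.range K, W (p + i) (q + j))
      = ((H : ℝ) * K)⁻¹ * ∑ i ∈ Finset.range H, ∑ j ∈ Finset.range K,
          ∑ p ∈ Finset.range N, ∑ q ∈ Finset.range N, W (p + i) (q + j) := by
    simp only [← Finset.mul_sum]
    congr 1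
    have hq : ∀ p, ∑ q ∈ Finset.range N, ∑ i ∈ Finset.range H, ∑ j ∈ Finset.range K,
        W (p + i) (q + j) = ∑ i ∈ Finset.range H, ∑ j ∈ Finset.range K,
          ∑ q ∈ Finset.range N, W (p + i) (q + j) := by
      intro p
      rw [Finset.sum_comm]
      exact Finset.sum_congr rfl fun i _ => Finset.sum_comm
    simp only [hq]
    rw [Finset.sum_comm]
    exact Finset.sum_congr rfl fun i _ => Finset.sum_comm
  have e2 : Z0 = ((H : ℝ) * K)⁻¹ * ∑ i ∈ Finset.range H, ∑ j ∈ Finset.range K, Z0 := by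
    simp
    field_simp
  have e3 : |∑ p ∈ Finset.range N, ∑ q ∈ Finset.range N,
        (((H : ℝ) * K)⁻¹ * ∑ i ∈ Finset.range H, ∑ j ∈ Finset.range K, W (p + i) (q + j)) - Z0|
      ≤ 2 * (H + K) * C * N := by
    rw [e1]
    nth_rewrite 1 [e2]
    rw [← mul_sub, ← Finset.sum_sub_distrib, abs_mul, abs_of_pos (by positivity : 0 < ((H : ℝ) * K)⁻¹)]
    have : |∑ i ∈ Finset.range H, (∑ j ∈ Finset.range K,
          ∑ p ∈ Finset.range N, ∑ q ∈ Finset.range N, W (p + i) (q + j) - ∑ j ∈ Finset.range K, Z0)|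
        ≤ H * (K * (2 * (H + K) * C * N)) := by
      refine (Finset.abs_sum_le_sum_abs _ _).trans ?_
      refine (Finset.sum_le_card_nsmul _ _ (K * (2 * (H + K) * C * N)) fun i hi => ?_).trans (by simp)
      rw [← Finset.sum_sub_distrib]
      refine (Finset.abs_sum_le_sum_abs _ _).trans ?_
      refine (Finset.sum_le_card_nsmul _ _ (2 * (H + K) * C * N) fun j hj => ?_).trans (by simp)
      refine (shift2 W C hw N i j).trans ?_
      have : (i:ℝ) ≤ H := by exact_mod_cast (Finset.mem_range.1 hi).le
      have : (j:ℝ) ≤ K := by exact_mod_cast (Finset.mem_range.1 hj).le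
      gcongr
    calc _ ≤ ((H : ℝ) * K)⁻¹ * (H * (K * (2 * (H + K) * C * N))) := by gcongr
      _ = _ := by field_simp
  have e4 : |∑ p ∈ Finset.range N, ∑ q ∈ Finset.range N,
        (((H : ℝ) * K)⁻¹ * ∑ i ∈ Finset.range H, ∑ j ∈ Finset.range K, W (p + i) (q + j))|
      ≤ ∑ p ∈ Finset.range N, ∑ q ∈ Finset.range N,
        |((H : ℝ) * K)⁻¹ * ∑ i ∈ Finset.range H, ∑ j ∈ Finset.range K, W (p + i) (q + j)| :=
    (Finset.abs_sum_le_sum_abs _ _).trans (Finset.sum_le_sum fun p _ => Finset.abs_sum_le_sum_abs _ _)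
  have a3 := abs_le.1 e3
  have a4 := abs_le.1 e4
  rw [abs_le]
  constructor <;> linarith

lemma amgm (t e : ℝ) (ht : 0 ≤ t) (he : 0 < e) : t ≤ e + t ^ 4 / e ^ 3 := by
  rcases le_total t e with h | h
  · have : 0 ≤ t ^ 4 / e ^ 3 := by positivity
    linarith
  · have : t ≤ t ^ 4 / e ^ 3 := by
      rw [le_div_iff₀ (by positivity)]
      have : e ^ 3 ≤ t ^ 3 := by gcongr
      nlinarith
    linarith

lemma box_cs (u v : ℕ → ℝ) (a : ℕ → ℕ → ℝ) (c : ℝ) (hu : ∀ i, |u i| ≤ c)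
    (hv : ∀ i, |v i| ≤ c) (H K : ℕ) :
    (∑ i ∈ Finset.range H, ∑ j ∈ Finset.range K, u i * v j * a i j) ^ 4 ≤
      (H : ℝ) ^ 2 * K ^ 2 * c ^ 8 * ∑ j ∈ Finset.range K, ∑ j' ∈ Finset.range K,
        (∑ i ∈ Finset.range H, a i j * a i j') ^ 2 := by
  have hu2 : ∀ i, u i ^ 2 ≤ c ^ 2 := fun i => sq_le_sq' (abs_le.1 (hu i)).1 (abs_le.1 (hu i)).2
  have hv2 : ∀ i, v i ^ 2 ≤ c ^ 2 := fun i => sq_le_sq' (abs_le.1 (hv i)).1 (abs_le.1 (hv i)).2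
  set Q := ∑ i ∈ Finset.range H, (∑ j ∈ Finset.range K, v j * a i j) ^ 2 with hQ
  have h1 : (∑ i ∈ Finset.range H, ∑ j ∈ Finset.range K, u i * v j * a i j) ^ 2 ≤ H * c ^ 2 * Q := by
    have e : ∀ i, ∑ j ∈ Finset.range K, u i * v j * a i j = u i * ∑ j ∈ Finset.range K, v j * a i j := by
      intro i; rw [Finset.mul_sum]; exact Finset.sum_congr rfl fun j _ => by ring
    simp only [e]
    refine (Finset.sum_mul_sq_le_sq_mul_sq _ _ _).trans ?_
    have : ∑ i ∈ Finset.range H, u i ^ 2 ≤ H * c ^ 2 :=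
      (Finset.sum_le_card_nsmul _ _ _ fun i _ => hu2 i).trans (by simp)
    exact mul_le_mul_of_nonneg_right this (Finset.sum_nonneg fun i _ => sq_nonneg _)
  have hQ0 : 0 ≤ Q := Finset.sum_nonneg fun i _ => sq_nonneg _
  have eQ : Q = ∑ z ∈ Finset.range K ×ˢ Finset.range K,
      (v z.1 * v z.2) * ∑ i ∈ Finset.range H, a i z.1 * a i z.2 := by
    rw [hQ]
    simp only [Finset.mul_sum]
    rw [Finset.sum_comm]
    refine Finset.sum_congr rfl fun i _ => ?_
    rw [sq, Finset.sum_mul_sum, Finset.sum_product]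
    exact Finset.sum_congr rfl fun j _ => Finset.sum_congr rfl fun j' _ => by ring
  have h2 : Q ^ 2 ≤ (K ^ 2 * c ^ 4) * ∑ j ∈ Finset.range K, ∑ j' ∈ Finset.range K,
        (∑ i ∈ Finset.range H, a i j * a i j') ^ 2 := by
    rw [eQ]
    refine (Finset.sum_mul_sq_le_sq_mul_sq _ _ _).trans ?_
    rw [← Finset.sum_product' (Finset.range K) (Finset.range K)
      (fun j j' => (∑ i ∈ Finset.range H, a i j * a i j') ^ 2)]
    refine mul_le_mul_of_nonneg_right ?_ (Finset.sum_nonneg fun i _ => sq_nonneg _)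
    refine (Finset.sum_le_card_nsmul _ _ (c ^ 4) fun z _ => ?_).trans ?_
    · calc (v z.1 * v z.2) ^ 2 = v z.1 ^ 2 * v z.2 ^ 2 := by ring
        _ ≤ c ^ 2 * c ^ 2 := mul_le_mul (hv2 _) (hv2 _) (sq_nonneg _) (sq_nonneg _)
        _ = c ^ 4 := by ring
    · simp [sq]
  calc (∑ i ∈ Finset.range H, ∑ j ∈ Finset.range K, u i * v j * a i j) ^ 4
      = ((∑ i ∈ Finset.range H, ∑ j ∈ Finset.range K, u i * v j * a i j) ^ 2) ^ 2 := by ring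
    _ ≤ (H * c ^ 2 * Q) ^ 2 := by gcongr
    _ = H ^ 2 * c ^ 4 * Q ^ 2 := by ring
    _ ≤ H ^ 2 * c ^ 4 * ((K ^ 2 * c ^ 4) * ∑ j ∈ Finset.range K, ∑ j' ∈ Finset.range K,
        (∑ i ∈ Finset.range H, a i j * a i j') ^ 2) := by gcongr
    _ = _ := by ring

lemma invSigma_le' {X : Type*} [m : MeasurableSpace X] (R : X → X) : invSigma R ≤ m :=
  fun _ h => h.1

lemma met0 {X : Type*} [mX : MeasurableSpace X] (μ : Measure X) [IsProbabilityMeasure μ]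
    (R : X → X) (hR : MeasurePreserving R μ μ) (f : X → ℝ) (hf : Measurable f)
    (hb : ∃ C, ∀ x, |f x| ≤ C) :
    ∃ u : ℕ → Lp ℝ 2 μ, ∃ v : Lp ℝ 2 μ,
      (∀ n, u n =ᵐ[μ] fun x => (n : ℝ)⁻¹ * ∑ i ∈ Finset.range n, f (R^[i] x)) ∧
      v =ᵐ[μ] μ[f | invSigma R] ∧ Tendsto u atTop (nhds v) := by
  obtain ⟨C, hC⟩ := hb
  have hRm := hR.measurable
  have hfL : MemLp f 2 μ := MemLp.of_bound hf.aestronglyMeasurable C (ae_of_all _ hC)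
  set F : Lp ℝ 2 μ := hfL.toLp f with hF
  set U : Lp ℝ 2 μ →L[ℝ] Lp ℝ 2 μ :=
    (Lp.compMeasurePreservingₗᵢ ℝ R hR).toContinuousLinearMap with hU
  have hUa : ∀ G : Lp ℝ 2 μ, U G =ᵐ[μ] fun x => G (R x) := fun G =>
    Lp.coeFn_compMeasurePreserving G hR
  have hmet := U.tendsto_birkhoffAverage_orthogonalProjection
    (LinearIsometry.norm_toContinuousLinearMap_le _) F
  set P := (U.eqLocus (1 : Lp ℝ 2 μ →L[ℝ] Lp ℝ 2 μ)).orthogonalProjectionOnto F with hP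
  set v : Lp ℝ 2 μ := (P : Lp ℝ 2 μ) with hv
  have hit : ∀ i, (U^[i] F : Lp ℝ 2 μ) =ᵐ[μ] fun x => f (R^[i] x) := by
    intro i
    induction i with
    | zero => exact hfL.coeFn_toLp
    | succ i ih =>
      rw [Function.iterate_succ_apply']
      have h2 := hR.quasiMeasurePreserving.ae_eq_comp ih
      filter_upwards [hUa (U^[i] F), h2] with x h3 h4
      rw [h3]
      simp only [Function.comp] at h4
      rw [h4, Function.iterate_succ_apply]
  refine ⟨fun n => birkhoffAverage ℝ U _root_.id n F, v, ?_, ?_, hmet⟩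
  · intro n
    have h1 : birkhoffAverage ℝ U _root_.id n F = (n:ℝ)⁻¹ • ∑ i ∈ Finset.range n, U^[i] F := by
      simp [birkhoffAverage, birkhoffSum]
    beta_reduce
    rw [h1]
    have h3 := Lp.coeFn_smul (n:ℝ)⁻¹ (∑ i ∈ Finset.range n, U^[i] F)
    have h4 : ((∑ i ∈ Finset.range n, U^[i] F : Lp ℝ 2 μ) : X → ℝ) =ᵐ[μ]
        fun x => ∑ i ∈ Finset.range n, f (R^[i] x) := by
      clear h1 h3
      induction n with
      | zero => 
        filter_upwards [Lp.coeFn_zero ℝ 2 μ] with x hx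
        simpa using hx
      | succ n ih =>
        rw [Finset.sum_range_succ]
        filter_upwards [Lp.coeFn_add (∑ i ∈ Finset.range n, U^[i] F) (U^[n] F), ih, hit n]
          with x h5 h6 h7
        rw [h5, Pi.add_apply, h6, h7, Finset.sum_range_succ]
    filter_upwards [h3, h4] with x h5 h6
    rw [h5, Pi.smul_apply, h6, smul_eq_mul]
  · have hvm : Measurable v := (Lp.stronglyMeasurable v).measurable
    have hvfix : U v = v := P.2
    have hvR : ∀ᵐ x ∂μ, v (R x) = v x := by
      have := hUa v
      rw [hvfix] at this
      filter_upwards [this] with x h using h.symm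
    let G : X → ℝ := fun x => limsup (fun n : ℕ => v (R^[n] x)) atTop
    have hGm : Measurable G := Measurable.limsup fun i => hvm.comp (hRm.iterate i)
    have hGR : ∀ x, G (R x) = G x := fun x => limsup_nat_add (fun n : ℕ => v (R^[n] x)) 1
    have hGv : v =ᵐ[μ] G := by
      have hall : ∀ n : ℕ, ∀ᵐ x ∂μ, v (R^[n] x) = v x := by
        intro n
        induction n with
        | zero => simp
        | succ n ih =>
          have h2 := hR.quasiMeasurePreserving.ae ih
          filter_upwards [h2, hvR] with x h3 h4
          rw [Function.iterate_succ_apply, h3, h4]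
      filter_upwards [ae_all_iff.2 hall] with x hx
      simp [G, hx]
    have hGI : Measurable[invSigma R] G := by
      intro s hs
      refine ⟨hGm hs, ?_⟩
      ext x
      simp only [Set.mem_preimage, hGR]
    have hvi : Integrable v μ := (Lp.memLp v).integrable (by norm_num)
    refine ae_eq_condExp_of_forall_setIntegral_eq (invSigma_le' R)
      (hfL.integrable (by norm_num)) (fun s hs _ => hvi.integrableOn) ?_
      ⟨G, hGI.stronglyMeasurable, hGv⟩
    intro s hs _
    have hχ : U (indicatorConstLp 2 hs.1 (measure_ne_top μ s) (1:ℝ))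
        = indicatorConstLp 2 hs.1 (measure_ne_top μ s) (1:ℝ) := by
      ext1
      have h1 := indicatorConstLp_coeFn (p := 2) (hs := hs.1) (hμs := measure_ne_top μ s) (c := (1:ℝ))
      have h2 := hR.quasiMeasurePreserving.ae_eq_comp h1
      filter_upwards [hUa (indicatorConstLp 2 hs.1 (measure_ne_top μ s) (1:ℝ)), h1, h2] with x a1 a2 a3
      simp only [Function.comp] at a3
      rw [a1, a2, a3]
      have : R x ∈ s ↔ x ∈ s := by
        conv_rhs => rw [← hs.2]
        rfl
      by_cases hx : x ∈ s
      · rw [Set.indicator_of_mem hx, Set.indicator_of_mem (this.2 hx)]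
      · rw [Set.indicator_of_notMem hx, Set.indicator_of_notMem (fun h => hx (this.1 h))]
    have h3 := Submodule.inner_orthogonalProjectionOnto_eq_of_mem_left
      (K := U.eqLocus (1 : Lp ℝ 2 μ →L[ℝ] Lp ℝ 2 μ)) (𝕜 := ℝ)
      ⟨indicatorConstLp 2 hs.1 (measure_ne_top μ s) (1:ℝ), hχ⟩ F
    rw [Submodule.coe_inner] at h3
    have h4 := L2.inner_indicatorConstLp_one (𝕜 := ℝ) hs.1 (measure_ne_top μ s) v
    have h5 := L2.inner_indicatorConstLp_one (𝕜 := ℝ) hs.1 (measure_ne_top μ s) F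
    rw [← h4]
    refine h3.trans ?_
    rw [h5]
    exact setIntegral_congr_ae hs.1 (by filter_upwards [hfL.coeFn_toLp] with x hx _ using hx)

lemma met {X : Type*} [mX : MeasurableSpace X] (μ : Measure X) [IsProbabilityMeasure μ]
    (R : X → X) (hR : MeasurePreserving R μ μ) (f g : X → ℝ) (hf : Measurable f)
    (hg : Measurable g) (hb : ∃ C, ∀ x, |f x| ≤ C) (hb' : ∃ C, ∀ x, |g x| ≤ C) :
    Tendsto (fun n : ℕ => ∫ x, ((n : ℝ)⁻¹ * ∑ i ∈ Finset.range n, f (R^[i] x)) *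
        ((n : ℝ)⁻¹ * ∑ i ∈ Finset.range n, g (R^[i] x)) ∂μ) atTop
      (nhds (∫ x, (μ[f | invSigma R]) x * (μ[g | invSigma R]) x ∂μ)) := by
  obtain ⟨u, v, h1, h2, h3⟩ := met0 μ R hR f hf hb
  obtain ⟨u', v', h1', h2', h3'⟩ := met0 μ R hR g hg hb'
  have h4 := Filter.Tendsto.inner (𝕜 := ℝ) h3' h3
  have e1 : ∀ n, inner ℝ (u' n) (u n) = ∫ x, ((n : ℝ)⁻¹ * ∑ i ∈ Finset.range n, f (R^[i] x)) *
        ((n : ℝ)⁻¹ * ∑ i ∈ Finset.range n, g (R^[i] x)) ∂μ := by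
    intro n
    rw [L2.inner_def]
    refine integral_congr_ae ?_
    filter_upwards [h1 n, h1' n] with x a b
    rw [a, b]
    rfl
  have e2 : inner ℝ v' v = ∫ x, (μ[f | invSigma R]) x * (μ[g | invSigma R]) x ∂μ := by
    rw [L2.inner_def]
    refine integral_congr_ae ?_
    filter_upwards [h2, h2'] with x a b
    rw [a, b]
    rfl
  simp only [e1, e2] at h4
  exact h4

lemma isProb_of_joining {X : Type*} [MeasurableSpace X] (μ : Measure X) [IsProbabilityMeasure μ]
    (S : X → X) (μS : Measure (X × X)) (hμS : IsRelIndJoining μ S μS) :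
    IsProbabilityMeasure μS := by
  have h := hμS (fun _ => 1) (fun _ => 1) measurable_const measurable_const
    ⟨1, fun x => by simp⟩ ⟨1, fun x => by simp⟩
  have e : μ[(fun _ => (1:ℝ)) | invSigma S] = fun _ => 1 := condExp_const (invSigma_le' S) 1
  rw [e] at h
  simp at h
  refine ⟨?_⟩
  have : (μS Set.univ).toReal = 1 := h
  rwa [ENNReal.toReal_eq_one_iff] at this

lemma joining_mp {X : Type*} [MeasurableSpace X] (μ : Measure X) [IsProbabilityMeasure μ]
    (S T : X → X) (hS : MeasurePreserving S μ μ) (hT : MeasurePreserving T μ μ)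
    (hcomm : Function.Commute S T)
    (μS : Measure (X × X)) [IsProbabilityMeasure μS] (hμS : IsRelIndJoining μ S μS) :
    MeasurePreserving (Prod.map T T) μS μS := by
  have hTm := hT.measurable
  have hm : Measurable (Prod.map T T) := hTm.prodMap hTm
  refine ⟨hm, ?_⟩
  have : IsProbabilityMeasure (μS.map (Prod.map T T)) := Measure.isProbabilityMeasure_map hm.aemeasurable
  have key : ∀ f g : X → ℝ, Measurable f → Measurable g → (∃ C, ∀ x, |f x| ≤ C) →
      (∃ C, ∀ x, |g x| ≤ C) →
      ∫ p, f (T p.1) * g (T p.2) ∂μS = ∫ p, f p.1 * g p.2 ∂μS := by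
    intro f g hf hg hb hb'
    rw [hμS f g hf hg hb hb']
    have := hμS (fun x => f (T x)) (fun x => g (T x)) (hf.comp hTm) (hg.comp hTm)
      (hb.imp fun C h x => h _) (hb'.imp fun C h x => h _)
    rw [this]
    have m1 := met μ S hS f g hf hg hb hb'
    have m2 := met μ S hS (fun x => f (T x)) (fun x => g (T x)) (hf.comp hTm) (hg.comp hTm)
      (hb.imp fun C h x => h _) (hb'.imp fun C h x => h _)
    refine tendsto_nhds_unique m2 (m1.congr fun n => ?_)
    have hSm := hS.measurable
    have hmeas : Measurable fun x => ((n : ℝ)⁻¹ * ∑ i ∈ Finset.range n, f (S^[i] x)) *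
        ((n : ℝ)⁻¹ * ∑ i ∈ Finset.range n, g (S^[i] x)) :=
      ((Finset.measurable_sum _ fun i _ => hf.comp (hSm.iterate i)).const_mul _).mul
        ((Finset.measurable_sum _ fun i _ => hg.comp (hSm.iterate i)).const_mul _)
    have h5 := integral_map (μ := μ) hTm.aemeasurable (f := fun x => ((n : ℝ)⁻¹ * ∑ i ∈ Finset.range n, f (S^[i] x)) *
        ((n : ℝ)⁻¹ * ∑ i ∈ Finset.range n, g (S^[i] x))) hmeas.aestronglyMeasurable
    rw [hT.map_eq] at h5
    rw [h5]
    have hc : ∀ i x, S^[i] (T x) = T (S^[i] x) := fun i x => (hcomm.iterate_left i) x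
    simp only [hc]
  refine Measure.ext_prod fun {s t} hs ht => ?_
  rw [Measure.map_apply hm (hs.prod ht)]
  have ind : ∀ (s t : Set X) , MeasurableSet s → MeasurableSet t →
      ∫ p, s.indicator (fun _ => (1:ℝ)) p.1 * t.indicator (fun _ => (1:ℝ)) p.2 ∂μS
        = μS.real (s ×ˢ t) := by
    intro s t hs ht
    rw [← integral_indicator_one (hs.prod ht)]
    congr 1
    ext p
    by_cases h1 : p.1 ∈ s <;> by_cases h2 : p.2 ∈ t <;> simp [Set.indicator, h1, h2]
  have hbd : ∀ s : Set X, ∃ C, ∀ x, |s.indicator (fun _ => (1:ℝ)) x| ≤ C := fun s =>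
    ⟨1, fun x => by by_cases h : x ∈ s <;> simp [h]⟩
  have hk := key (s.indicator fun _ => 1) (t.indicator fun _ => 1)
    (measurable_const.indicator hs) (measurable_const.indicator ht) (hbd s) (hbd t)
  rw [ind s t hs ht] at hk
  have hk2 := ind (T ⁻¹' s) (T ⁻¹' t) (hTm hs) (hTm ht)
  have e : ∀ (s : Set X) (x : X), (T ⁻¹' s).indicator (fun _ => (1:ℝ)) x = s.indicator (fun _ => 1) (T x) :=
    fun s x => rfl
  simp only [e] at hk2
  rw [hk2] at hk
  have e2 : Prod.map T T ⁻¹' s ×ˢ t = (T ⁻¹' s) ×ˢ (T ⁻¹' t) := rfl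
  rw [e2]
  exact (ENNReal.toReal_eq_toReal_iff' (measure_ne_top _ _) (measure_ne_top _ _)).1 hk

/-- The (rectangular) box average of `f`. -/
noncomputable def boxB {X : Type*} (S T : X → X) (f : X → ℝ) (H K : ℕ) (y : X) : ℝ :=
  ((K : ℝ) ^ 2)⁻¹ * ∑ j ∈ Finset.range K, ∑ j' ∈ Finset.range K,
    ((H : ℝ)⁻¹ * ∑ i ∈ Finset.range H, f (S^[i] (T^[j] y)) * f (S^[i] (T^[j'] y))) ^ 2

lemma avg_abs_le (H : ℕ) (w : ℕ → ℝ) (C : ℝ) (hC : 0 ≤ C) (hw : ∀ i, |w i| ≤ C) :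
    |(H : ℝ)⁻¹ * ∑ i ∈ Finset.range H, w i| ≤ C := by
  rcases Nat.eq_zero_or_pos H with rfl | h
  · simpa using hC
  have hH : (0:ℝ) < H := by exact_mod_cast h
  rw [abs_mul, abs_of_pos (inv_pos.2 hH), inv_mul_le_iff₀ hH]
  refine (Finset.abs_sum_le_sum_abs _ _).trans ?_
  exact (Finset.sum_le_card_nsmul _ _ C fun i _ => hw i).trans (by simp)

lemma boxB_nonneg {X : Type*} (S T : X → X) (f : X → ℝ) (H K : ℕ) (y : X) :
    0 ≤ boxB S T f H K y := by
  unfold boxB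
  refine mul_nonneg (by positivity) (Finset.sum_nonneg fun j _ => Finset.sum_nonneg fun j' _ => sq_nonneg _)

lemma term_le {X : Type*} (S T : X → X) (f : X → ℝ) (c : ℝ) (hf : ∀ x, |f x| ≤ c)
    (H j j' : ℕ) (y : X) :
    ((H : ℝ)⁻¹ * ∑ i ∈ Finset.range H, f (S^[i] (T^[j] y)) * f (S^[i] (T^[j'] y))) ^ 2 ≤ c ^ 4 := by
  have hc : 0 ≤ c := (abs_nonneg _).trans (hf y)
  have := avg_abs_le H (fun i => f (S^[i] (T^[j] y)) * f (S^[i] (T^[j'] y))) (c * c) (by positivity)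
    (fun i => by rw [abs_mul]; exact mul_le_mul (hf _) (hf _) (abs_nonneg _) hc)
  have h2 := sq_le_sq' (abs_le.1 this).1 (abs_le.1 this).2
  exact h2.trans (by ring_nf; exact le_rfl)

lemma boxB_le {X : Type*} (S T : X → X) (f : X → ℝ) (c : ℝ) (hf : ∀ x, |f x| ≤ c)
    (H K : ℕ) (y : X) : boxB S T f H K y ≤ c ^ 4 := by
  unfold boxB
  rcases Nat.eq_zero_or_pos K with rfl | h
  · simp; positivity
  have hK : (0:ℝ) < K := by exact_mod_cast h
  rw [inv_mul_le_iff₀ (by positivity)]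
  refine (Finset.sum_le_card_nsmul _ _ (K * c ^ 4) fun j _ => ?_).trans (by simp [sq, mul_assoc])
  exact (Finset.sum_le_card_nsmul _ _ (c ^ 4) fun j' _ => term_le S T f c hf H j j' y).trans (by simp)

lemma boxB_meas {X : Type*} [MeasurableSpace X] (S T : X → X) (hS : Measurable S)
    (hT : Measurable T) (f : X → ℝ) (hf : Measurable f) (H K : ℕ) :
    Measurable (boxB S T f H K) := by
  unfold boxB
  have := fun i => hS.iterate i
  have := fun i => hT.iterate i
  fun_prop

lemma box_block {X : Type*} (S T : X → X) (f : X → ℝ) (u v : ℕ → ℝ) (c e : ℝ) (he : 0 < e)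
    (hu : ∀ i, |u i| ≤ c) (hv : ∀ i, |v i| ≤ c) (H K : ℕ) (hH : 0 < H) (hK : 0 < K) (y : X) :
    |((H : ℝ) * K)⁻¹ * ∑ i ∈ Finset.range H, ∑ j ∈ Finset.range K,
      u i * v j * f (S^[i] (T^[j] y))| ≤ e + c ^ 8 / e ^ 3 * boxB S T f H K y := by
  have hH' : (0:ℝ) < H := by exact_mod_cast hH
  have hK' : (0:ℝ) < K := by exact_mod_cast hK
  refine (amgm _ e (abs_nonneg _) he).trans ?_
  have h1 := box_cs u v (fun i j => f (S^[i] (T^[j] y))) c hu hv H K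
  have e4 : ∀ t : ℝ, |t| ^ 4 = t ^ 4 := fun t => Even.pow_abs (by decide) t
  have h2 : boxB S T f H K y = (((H : ℝ) * K)⁻¹) ^ 2 * ∑ j ∈ Finset.range K, ∑ j' ∈ Finset.range K,
        (∑ i ∈ Finset.range H, f (S^[i] (T^[j] y)) * f (S^[i] (T^[j'] y))) ^ 2 := by
    unfold boxB
    simp only [mul_pow, ← Finset.mul_sum, ← mul_assoc]
    congr 1
    field_simp
  rw [e4, mul_pow, h2]
  have h3 : (((H : ℝ) * K)⁻¹) ^ 4 * (∑ i ∈ Finset.range H, ∑ j ∈ Finset.range K,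
      u i * v j * f (S^[i] (T^[j] y))) ^ 4 ≤ c ^ 8 * ((((H : ℝ) * K)⁻¹) ^ 2 * ∑ j ∈ Finset.range K, ∑ j' ∈ Finset.range K,
        (∑ i ∈ Finset.range H, f (S^[i] (T^[j] y)) * f (S^[i] (T^[j'] y))) ^ 2) := by
    refine (mul_le_mul_of_nonneg_left h1 (by positivity)).trans (le_of_eq ?_)
    field_simp
  have h4 := div_le_div_of_nonneg_right h3 (by positivity : 0 ≤ e ^ 3)
  rw [mul_div_right_comm (c ^ 8)] at h4
  linarith

lemma exists_small_box {X : Type*} [MeasurableSpace X]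
    (μ : Measure X) [IsProbabilityMeasure μ]
    (S T : X → X) (hS : MeasurePreserving S μ μ) (hT : MeasurePreserving T μ μ)
    (hcomm : Function.Commute S T)
    (μS : Measure (X × X)) (hμS : IsRelIndJoining μ S μS) (f : X → ℝ) (hf : Measurable f)
    (c : ℝ) (hc : ∀ x, |f x| ≤ c)
    (h0 : ∫ q, (μS[(fun r => f r.1 * f r.2) | invSigma (Prod.map T T)]) q *
           (μS[(fun r => f r.1 * f r.2) | invSigma (Prod.map T T)]) q ∂μS = 0)
    (e : ℝ) (he : 0 < e) :
    ∃ H K : ℕ, 0 < H ∧ 0 < K ∧ ∫ y, boxB S T f H K y ∂μ < e := by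
  have := isProb_of_joining μ S μS hμS
  have hmp := joining_mp μ S T hS hT hcomm μS hμS
  have hTm := hT.measurable
  have hSm := hS.measurable
  have hFm : Measurable fun r : X × X => f r.1 * f r.2 := by fun_prop
  have hFb : ∃ C, ∀ r : X × X, |f r.1 * f r.2| ≤ C := ⟨c * c, fun r => by
    rw [abs_mul]; exact mul_le_mul (hc _) (hc _) (abs_nonneg _) ((abs_nonneg _).trans (hc r.1))⟩
  have m1 := met μS (Prod.map T T) hmp _ _ hFm hFm hFb hFb
  rw [h0] at m1
  obtain ⟨K, hK1, hK2⟩ := ((m1.eventually (gt_mem_nhds he)).and (eventually_gt_atTop 0)).exists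
  -- the inner functions
  let g : ℕ → ℕ → X → ℝ := fun j j' y => f (T^[j] y) * f (T^[j'] y)
  have hgm : ∀ j j', Measurable (g j j') := fun j j' =>
    (hf.comp (hTm.iterate j)).mul (hf.comp (hTm.iterate j'))
  have hgb : ∀ j j' x, |g j j' x| ≤ c * c := fun j j' x => by
    simp only [g]
    rw [abs_mul]; exact mul_le_mul (hc _) (hc _) (abs_nonneg _) ((abs_nonneg _).trans (hc x))
  have m2 : ∀ j j', Tendsto (fun H : ℕ => ∫ y, ((H : ℝ)⁻¹ * ∑ i ∈ Finset.range H,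
      f (S^[i] (T^[j] y)) * f (S^[i] (T^[j'] y))) ^ 2 ∂μ) atTop
      (nhds (∫ p, g j j' p.1 * g j j' p.2 ∂μS)) := by
    intro j j'
    rw [hμS _ _ (hgm j j') (hgm j j') ⟨_, hgb j j'⟩ ⟨_, hgb j j'⟩]
    refine (met μ S hS _ _ (hgm j j') (hgm j j') ⟨_, hgb j j'⟩ ⟨_, hgb j j'⟩).congr fun H => ?_
    congr 1
    ext y
    rw [← sq]
    congr 2
    refine Finset.sum_congr rfl fun i _ => ?_
    simp only [g]
    rw [(hcomm.iterate_iterate i j).eq, (hcomm.iterate_iterate i j').eq]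
  have m3 : Tendsto (fun H : ℕ => ∫ y, boxB S T f H K y ∂μ) atTop
      (nhds (((K:ℝ) ^ 2)⁻¹ * ∑ j ∈ Finset.range K, ∑ j' ∈ Finset.range K,
        ∫ p, g j j' p.1 * g j j' p.2 ∂μS)) := by
    have := (tendsto_finsetSum (Finset.range K) fun j _ =>
      tendsto_finsetSum (Finset.range K) fun j' _ => m2 j j').const_mul (((K:ℝ) ^ 2)⁻¹)
    refine this.congr fun H => ?_
    unfold boxB
    have hint : ∀ j j', Integrable (fun y => ((H : ℝ)⁻¹ * ∑ i ∈ Finset.range H,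
        f (S^[i] (T^[j] y)) * f (S^[i] (T^[j'] y))) ^ 2) μ := fun j j' => by
      refine Integrable.of_bound (Measurable.aestronglyMeasurable ?_) (c ^ 4) (ae_of_all _ fun y => ?_)
      · have := fun i => hSm.iterate i
        have := fun i => hTm.iterate i
        fun_prop
      · rw [Real.norm_of_nonneg (sq_nonneg _)]
        exact term_le S T f c hc H j j' y
    rw [integral_const_mul, integral_finsetSum _ fun j _ => integrable_finsetSum _ fun j' _ => hint j j']
    congr 1
    refine Finset.sum_congr rfl fun j _ => ?_
    rw [integral_finsetSum _ fun j' _ => hint j j']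
  have e5 : ((K:ℝ) ^ 2)⁻¹ * ∑ j ∈ Finset.range K, ∑ j' ∈ Finset.range K,
        ∫ p, g j j' p.1 * g j j' p.2 ∂μS < e := by
    refine lt_of_eq_of_lt ?_ hK1
    have hint : ∀ j j', Integrable (fun p : X × X => g j j' p.1 * g j j' p.2) μS := fun j j' => by
      refine Integrable.of_bound (Measurable.aestronglyMeasurable ?_) ((c * c) * (c * c)) (ae_of_all _ fun y => ?_)
      · have := hgm j j'
        fun_prop
      · rw [Real.norm_eq_abs, abs_mul]
        exact mul_le_mul (hgb _ _ _) (hgb _ _ _) (abs_nonneg _) ((abs_nonneg _).trans (hgb j j' y.1))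
    have e6 : ∀ p : X × X, ((K : ℝ)⁻¹ * ∑ i ∈ Finset.range K,
          f ((Prod.map T T)^[i] p).1 * f ((Prod.map T T)^[i] p).2) *
        ((K : ℝ)⁻¹ * ∑ i ∈ Finset.range K,
          f ((Prod.map T T)^[i] p).1 * f ((Prod.map T T)^[i] p).2)
        = ((K:ℝ) ^ 2)⁻¹ * ∑ j ∈ Finset.range K, ∑ j' ∈ Finset.range K, g j j' p.1 * g j j' p.2 := by
      intro p
      rw [mul_mul_mul_comm, Finset.sum_mul_sum, ← mul_inv, ← sq]
      congr 1
      refine Finset.sum_congr rfl fun j _ => Finset.sum_congr rfl fun j' _ => ?_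
      simp only [Prod.map_iterate, Prod.map_fst, Prod.map_snd, g]
      ring
    simp only [e6]
    rw [integral_const_mul, integral_finsetSum _ fun j _ => integrable_finsetSum _ fun j' _ => hint j j']
    congr 1
    refine Finset.sum_congr rfl fun j _ => ?_
    rw [integral_finsetSum _ fun j' _ => hint j j']
  obtain ⟨H, hH1, hH2⟩ := ((m3.eventually (gt_mem_nhds e5)).and (eventually_gt_atTop 0)).exists
  exact ⟨H, K, hH2, hK2, hH1⟩

lemma except_set {X : Type*} [MeasurableSpace X]
    (μ : Measure X) [IsProbabilityMeasure μ]
    (S T : X → X) (hS : MeasurePreserving S μ μ) (hT : MeasurePreserving T μ μ)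
    (hcomm : Function.Commute S T)
    (f1 f2 f3 : X → ℝ) (hf3 : Measurable f3) (c : ℝ) (hc : 1 ≤ c)
    (hb1 : ∀ x, |f1 x| ≤ c) (hb2 : ∀ x, |f2 x| ≤ c) (hb3 : ∀ x, |f3 x| ≤ c)
    (hsmall : ∀ e : ℝ, 0 < e → ∃ H K : ℕ, 0 < H ∧ 0 < K ∧ ∫ y, boxB S T f3 H K y ∂μ < e)
    (lam δ : ℝ) (hlam : 0 < lam) (hδ : 0 < δ) :
    ∃ E : Set X, μ.real E ≤ δ ∧ ∀ x, x ∉ E → ∀ᶠ N : ℕ in atTop,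
      |((N : ℝ) ^ 2)⁻¹ * ∑ i ∈ Finset.range N, ∑ j ∈ Finset.range N,
        f1 (S^[i] x) * f2 (T^[j] x) * f3 (S^[i] (T^[j] x))| ≤ lam := by
  have hc0 : 0 < c := by linarith
  obtain ⟨D, hD⟩ : ∃ D, D = c ^ 8 / (lam / 4) ^ 3 := ⟨_, rfl⟩
  have hD0 : 0 < D := by rw [hD]; positivity
  obtain ⟨l1, hl1⟩ : ∃ l1, l1 = lam / (4 * D) := ⟨_, rfl⟩
  obtain ⟨l2, hl2⟩ : ∃ l2, l2 = lam / (4 * D * c ^ 4) := ⟨_, rfl⟩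
  have hl1p : 0 < l1 := by rw [hl1]; positivity
  have hl2p : 0 < l2 := by rw [hl2]; positivity
  have hsum : D * (l1 + c ^ 4 * l2) = lam / 2 := by
    rw [hl1, hl2]; field_simp; norm_num
  obtain ⟨H, K, hH, hK, hB⟩ := hsmall (δ * (l1 * l2)) (by positivity)
  set B := boxB S T f3 H K with hBdef
  obtain ⟨hE1m, hE1⟩ := max_erg μ T hT B (boxB_meas S T hS.measurable hT.measurable f3 hf3 H K)
    (c ^ 4) (boxB_nonneg S T f3 H K) (boxB_le S T f3 c hb3 H K) l1 hl1p
  set E1 : Set X := {x | ∃ n : ℕ, l1 * n < ∑ i ∈ Finset.range n, B (T^[i] x)} with hE1def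
  have hind0 : ∀ x, 0 ≤ E1.indicator (fun _ => (1:ℝ)) x := fun x =>
    Set.indicator_nonneg (fun _ _ => zero_le_one) x
  obtain ⟨hE2m, hE2⟩ := max_erg μ S hS (E1.indicator fun _ => (1:ℝ))
    (measurable_const.indicator hE1m) 1 hind0
    (fun x => Set.indicator_le_self' (fun _ _ => zero_le_one) x) l2 hl2p
  rw [integral_indicator_const _ hE1m, smul_eq_mul, mul_one] at hE2
  set E2 : Set X := {x | ∃ n : ℕ, l2 * n < ∑ i ∈ Finset.range n,
    E1.indicator (fun _ => (1:ℝ)) (S^[i] x)} with hE2def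
  refine ⟨E2, ?_, ?_⟩
  · have h1 : l1 * (l2 * μ.real E2) ≤ l1 * μ.real E1 := by gcongr
    have h2 : (l1 * l2) * μ.real E2 ≤ (l1 * l2) * δ := by linarith
    exact le_of_mul_le_mul_left h2 (by positivity)
  · intro x hx
    have hx2 : ∀ n : ℕ, ∑ i ∈ Finset.range n, E1.indicator (fun _ => (1:ℝ)) (S^[i] x) ≤ l2 * n := by
      intro n
      by_contra hn
      exact hx ⟨n, not_le.1 hn⟩
    have hrow : ∀ (n : ℕ) (y : X), ∑ q ∈ Finset.range n, B (T^[q] y) ≤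
        n * (l1 + c ^ 4 * E1.indicator (fun _ => (1:ℝ)) y) := by
      intro n y
      by_cases hy : y ∈ E1
      · rw [Set.indicator_of_mem hy]
        refine (Finset.sum_le_card_nsmul _ _ (c ^ 4) fun q _ => boxB_le S T f3 c hb3 H K _).trans ?_
        simp only [Finset.card_range, nsmul_eq_mul]
        gcongr
        linarith
      · rw [Set.indicator_of_notMem hy]
        have : ¬ (l1 * n < ∑ q ∈ Finset.range n, B (T^[q] y)) := fun h => hy ⟨n, h⟩
        linarith [not_lt.1 this]
    have hBB : ∀ N : ℕ, ∑ p ∈ Finset.range N, ∑ q ∈ Finset.range N, B (T^[q] (S^[p] x)) ≤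
        (N:ℝ) ^ 2 * (l1 + c ^ 4 * l2) := by
      intro N
      calc ∑ p ∈ Finset.range N, ∑ q ∈ Finset.range N, B (T^[q] (S^[p] x))
          ≤ ∑ p ∈ Finset.range N, N * (l1 + c ^ 4 * E1.indicator (fun _ => (1:ℝ)) (S^[p] x)) :=
            Finset.sum_le_sum fun p _ => hrow N _
        _ = N * (N * l1 + c ^ 4 * ∑ p ∈ Finset.range N, E1.indicator (fun _ => (1:ℝ)) (S^[p] x)) := by
            rw [← Finset.mul_sum, Finset.sum_add_distrib, ← Finset.mul_sum]
            simp
        _ ≤ N * (N * l1 + c ^ 4 * (l2 * N)) := by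
            have := hx2 N
            gcongr
        _ = _ := by ring
    have hlim : Tendsto (fun N : ℕ => (2 * (H + K) * (c * c * c)) / (N:ℝ)) atTop (nhds 0) :=
      tendsto_const_div_atTop_nhds_zero_nat _
    filter_upwards [hlim.eventually (gt_mem_nhds (by positivity : 0 < lam / 4)),
      eventually_gt_atTop 0] with N hN hN0
    have hN0' : (0:ℝ) < N := by exact_mod_cast hN0
    have h1 := block_avg (fun p q => f1 (S^[p] x) * f2 (T^[q] x) * f3 (S^[p] (T^[q] x)))
      (c * c * c) (by positivity) (fun p q => by
        rw [abs_mul, abs_mul]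
        have := hb1 (S^[p] x)
        have := hb2 (T^[q] x)
        have := hb3 (S^[p] (T^[q] x))
        gcongr) N H K hH hK
    have h2 : ∀ p q, |((H : ℝ) * K)⁻¹ * ∑ i ∈ Finset.range H, ∑ j ∈ Finset.range K,
        f1 (S^[p + i] x) * f2 (T^[q + j] x) * f3 (S^[p + i] (T^[q + j] x))|
        ≤ lam / 4 + D * B (T^[q] (S^[p] x)) := by
      intro p q
      have := box_block S T f3 (fun i => f1 (S^[p + i] x)) (fun j => f2 (T^[q + j] x)) c (lam / 4)
        (by positivity) (fun i => hb1 _) (fun j => hb2 _) H K hH hK (T^[q] (S^[p] x))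
      rw [← hD] at this
      have hh : ∀ i j, S^[p + i] (T^[q + j] x) = S^[i] (T^[j] (T^[q] (S^[p] x))) := by
        intro i j
        rw [← Function.iterate_add_apply T j q, ← (hcomm.iterate_iterate p (j + q)).eq,
          ← Function.iterate_add_apply S, add_comm p i, add_comm q j]
      simp only [hh]
      exact this
    have h3 : ∑ p ∈ Finset.range N, ∑ q ∈ Finset.range N,
        |((H : ℝ) * K)⁻¹ * ∑ i ∈ Finset.range H, ∑ j ∈ Finset.range K,
        f1 (S^[p + i] x) * f2 (T^[q + j] x) * f3 (S^[p + i] (T^[q + j] x))|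
        ≤ (N:ℝ) ^ 2 * (lam / 4 + lam / 2) := by
      refine (Finset.sum_le_sum fun p _ => Finset.sum_le_sum fun q _ => h2 p q).trans ?_
      simp only [Finset.sum_add_distrib, ← Finset.mul_sum, Finset.sum_const, Finset.card_range, nsmul_eq_mul]
      have := mul_le_mul_of_nonneg_left (hBB N) hD0.le
      have e : D * ((N:ℝ) ^ 2 * (l1 + c ^ 4 * l2)) = (N:ℝ) ^ 2 * (lam / 2) := by
        rw [← hsum]; ring
      rw [e] at this
      linarith
    rw [abs_mul, abs_of_pos (by positivity : 0 < ((N:ℝ) ^ 2)⁻¹), inv_mul_le_iff₀ (by positivity)]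
    rw [div_lt_iff₀ hN0'] at hN
    have h4 := mul_le_mul_of_nonneg_right hN.le hN0'.le
    nlinarith [h1, h3, h4]

/-- in a free ergodic magic system, if `E(f3 | I_S ∨ I_T) = 0` then the cubic
averages converge to `0` almost everywhere. -/
theorem pointwise_cubic_average_zero_of_condexp_zero {X : Type*} [MeasurableSpace X]
    (μ : Measure X) [IsProbabilityMeasure μ]
    (S T : X ≃ᵐ X) (hS : MeasurePreserving S μ μ) (hT : MeasurePreserving T μ μ)
    (hcomm : ∀ x, S (T x) = T (S x))
    (herg : ∀ s : Set X, MeasurableSet s → ⇑S ⁻¹' s = s → ⇑T ⁻¹' s = s → μ s = 0 ∨ μ s = 1)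
    (hfree : ∀ i j : ℤ, ¬(i = 0 ∧ j = 0) →
      μ {x | (S.toEquiv ^ i) ((T.toEquiv ^ j) x) = x} = 0)
    (μS : Measure (X × X)) (hμS : IsRelIndJoining μ ⇑S μS)
    (μST : Measure (X × X × X × X)) (hμST : IsHostJoining μS ⇑T μST)
    (hmagic : ∀ f : X → ℝ, Measurable f → (∃ C, ∀ x, |f x| ≤ C) →
      ((μ[f | invSigma ⇑S ⊔ invSigma ⇑T]) =ᵐ[μ] 0 ↔ hostSeminorm μST f = 0))
    (f1 f2 f3 : X → ℝ) (hf1 : Measurable f1) (hf2 : Measurable f2) (hf3 : Measurable f3)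
    (hb1 : ∃ C, ∀ x, |f1 x| ≤ C) (hb2 : ∃ C, ∀ x, |f2 x| ≤ C) (hb3 : ∃ C, ∀ x, |f3 x| ≤ C)
    (hcond : (μ[f3 | invSigma ⇑S ⊔ invSigma ⇑T]) =ᵐ[μ] 0) :
    ∀ᵐ x ∂μ, Tendsto (fun N : ℕ =>
      ((N : ℝ) ^ 2)⁻¹ * ∑ i ∈ Finset.range N, ∑ j ∈ Finset.range N,
        f1 ((⇑S)^[i] x) * f2 ((⇑T)^[j] x) * f3 ((⇑S)^[i] ((⇑T)^[j] x)))
      atTop (nhds 0) := by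
  
  obtain ⟨c1, hc1⟩ := hb1
  obtain ⟨c2, hc2⟩ := hb2
  obtain ⟨c3, hc3⟩ := hb3
  set c := max (max 1 c1) (max c2 c3) with hcdef
  have hc : 1 ≤ c := (le_max_left _ _).trans (le_max_left _ _)
  have h1 : ∀ x, |f1 x| ≤ c := fun x => (hc1 x).trans ((le_max_right _ _).trans (le_max_left _ _))
  have h2 : ∀ x, |f2 x| ≤ c := fun x => (hc2 x).trans ((le_max_left _ _).trans (le_max_right _ _))
  have h3 : ∀ x, |f3 x| ≤ c := fun x => (hc3 x).trans ((le_max_right _ _).trans (le_max_right _ _))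
  have hsemi := (hmagic f3 hf3 ⟨c, h3⟩).1 hcond
  have hI := hμST f3 f3 f3 f3 hf3 hf3 hf3 hf3 ⟨c, h3⟩ ⟨c, h3⟩ ⟨c, h3⟩ ⟨c, h3⟩
  have hz : ∫ q, (μS[(fun r => f3 r.1 * f3 r.2) | invSigma (Prod.map T T)]) q *
           (μS[(fun r => f3 r.1 * f3 r.2) | invSigma (Prod.map T T)]) q ∂μS = 0 := by
    unfold hostSeminorm at hsemi
    rw [hI] at hsemi
    exact (Real.rpow_eq_zero (integral_nonneg fun q => mul_self_nonneg _) (by norm_num)).1 hsemi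
  have hcm : Function.Commute (S : X → X) (T : X → X) := hcomm
  have hsmall := exists_small_box μ S T hS hT hcm μS hμS f3 hf3 c h3 hz
  have hex := except_set μ S T hS hT hcm f1 f2 f3 hf3 c hc h1 h2 h3 hsmall
  have hae : ∀ m : ℕ, ∀ᵐ x ∂μ, ∀ᶠ N : ℕ in atTop,
      |((N : ℝ) ^ 2)⁻¹ * ∑ i ∈ Finset.range N, ∑ j ∈ Finset.range N,
        f1 ((⇑S)^[i] x) * f2 ((⇑T)^[j] x) * f3 ((⇑S)^[i] ((⇑T)^[j] x))| ≤ 1 / ((m:ℝ) + 1) := by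
    intro m
    rw [ae_iff]
    set Z := {x | ¬ ∀ᶠ N : ℕ in atTop,
      |((N : ℝ) ^ 2)⁻¹ * ∑ i ∈ Finset.range N, ∑ j ∈ Finset.range N,
        f1 ((⇑S)^[i] x) * f2 ((⇑T)^[j] x) * f3 ((⇑S)^[i] ((⇑T)^[j] x))| ≤ 1 / ((m:ℝ) + 1)} with hZ
    have hle : μ.real Z ≤ 0 := by
      refine le_of_forall_pos_le_add fun δ hδ => ?_
      rw [zero_add]
      obtain ⟨E, hE, hE2⟩ := hex (1 / ((m:ℝ) + 1)) δ (by positivity) hδ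
      refine le_trans (measureReal_mono ?_ (measure_ne_top μ E)) hE
      intro x hx
      by_contra hxE
      exact hx (hE2 x hxE)
    have := le_antisymm hle measureReal_nonneg
    rwa [measureReal_eq_zero_iff] at this
  filter_upwards [ae_all_iff.2 hae] with x hx
  rw [Metric.tendsto_nhds]
  intro e he
  obtain ⟨m, hm⟩ := exists_nat_one_div_lt he
  filter_upwards [hx m] with N hN
  rw [Real.dist_eq, sub_zero]
  exact lt_of_le_of_lt hN hm
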